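/- If a finite simple graph G contains K₄ − e as a subgraph, then τ₂(G) ≥ 7. -/

import Mathlib

/-- A `t`-tone `k`-coloring of a simple graph `G`: each vertex gets a set of `t`
distinct colors from `{1,…,k}`, and any two distinct vertices in the same
connected component share fewer colors than their distance. -/
def IsTToneColoring {V : Type*} (G : SimpleGraph V) (t k : ℕ) (f : V → Finset ℕ) : Prop :=
  (∀ v, f v ⊆ Finset.Icc 1 k ∧ (f v).card = t) ∧
  ∀ u v : V, u ≠ v → G.Reachable u v → ((f u) ∩ (f v)).card < G.dist u v

/-- The `t`-tone chromatic number: the least `k` admitting a `t`-tone `k`-coloring. -/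
noncomputable def toneNumber {V : Type*} (G : SimpleGraph V) (t : ℕ) : ℕ :=
  sInf {k | ∃ f : V → Finset ℕ, IsTToneColoring G t k f}

/-- The complete graph on four vertices with one edge removed. -/
def K4minusE : SimpleGraph (Fin 4) :=
  SimpleGraph.fromEdgeSet {s(0, 1), s(0, 2), s(0, 3), s(1, 2), s(1, 3)}

/-!
In `K₄ - e` the two vertices of degree three carry `2 * t` colors, none of which reappears on the
two non-adjacent vertices. The latter are at distance at most two in `G`, so they share at most one
color and carry at least `2 * t - 1` further colors.
-/

section Coloring

variable {V : Type*} {G : SimpleGraph V} {t k : ℕ} {f : V → Finset ℕ}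

theorem isTToneColoring_of_pairwise_disjoint (hf : ∀ v, f v ⊆ Finset.Icc 1 k ∧ (f v).card = t)
    (hdisj : Pairwise (Function.onFun Disjoint f)) : IsTToneColoring G t k f := by
  refine ⟨hf, fun u v huv hr => ?_⟩
  rw [Finset.disjoint_iff_inter_eq_empty.mp (hdisj huv), Finset.card_empty]
  exact hr.pos_dist_of_ne huv

theorem exists_isTToneColoring_of_finite [Finite V] (G : SimpleGraph V) (t : ℕ) :
    ∃ k f, IsTToneColoring G t k f := by
  obtain ⟨n, ⟨e⟩⟩ := Finite.exists_equiv_fin V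
  have blocks_disjoint : Pairwise (Function.onFun Disjoint
      fun i : ℕ => Finset.Ioc (t * i) (t * (i + 1))) := fun i j hij => by
    rw [Function.onFun, ← Finset.disjoint_coe, Finset.coe_Ioc, Finset.coe_Ioc]
    exact (monotone_id.const_mul' t).pairwise_disjoint_on_Ioc_succ hij
  refine ⟨t * n, fun v => Finset.Ioc (t * e v) (t * (e v + 1)),
    isTToneColoring_of_pairwise_disjoint (fun v => ⟨fun c hc => ?_, ?_⟩) ?_⟩
  · have block_le : t * (e v + 1 : ℕ) ≤ t * n := Nat.mul_le_mul_left t (e v).isLt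
    rw [Finset.mem_Ioc] at hc
    rw [Finset.mem_Icc]
    omega
  · rw [Nat.card_Ioc, Nat.mul_succ, Nat.add_sub_cancel_left]
  · exact blocks_disjoint.comp_of_injective (Fin.val_injective.comp e.injective)

theorem exists_isTToneColoring_toneNumber (h : ∃ k f, IsTToneColoring G t k f) :
    ∃ f, IsTToneColoring G t (toneNumber G t) f :=
  Nat.sInf_mem h

namespace IsTToneColoring

theorem card_inter_lt_length (hf : IsTToneColoring G t k f) {u v : V} (huv : u ≠ v)
    (p : G.Walk u v) : (f u ∩ f v).card < p.length :=
  (hf.2 u v huv p.reachable).trans_le (SimpleGraph.dist_le p)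

theorem disjoint_of_adj (hf : IsTToneColoring G t k f) {u v : V} (huv : G.Adj u v) :
    Disjoint (f u) (f v) := by
  rw [Finset.disjoint_iff_inter_eq_empty, ← Finset.card_eq_zero, ← Nat.lt_one_iff]
  exact hf.card_inter_lt_length huv.ne huv.toWalk

theorem card_inter_le_one_of_adj_of_adj (hf : IsTToneColoring G t k f) {u v w : V}
    (huv : u ≠ v) (huw : G.Adj u w) (hwv : G.Adj w v) : (f u ∩ f v).card ≤ 1 :=
  Nat.le_of_lt_succ (hf.card_inter_lt_length huv (.cons huw hwv.toWalk))

theorem card_union_of_adj (hf : IsTToneColoring G t k f) {u v : V} (huv : G.Adj u v) :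
    (f u ∪ f v).card = 2 * t := by
  rw [Finset.card_union_of_disjoint (hf.disjoint_of_adj huv), (hf.1 u).2, (hf.1 v).2, two_mul]

theorem two_mul_sub_one_le_card_union_of_adj_of_adj (hf : IsTToneColoring G t k f) {u v w : V}
    (huv : u ≠ v) (huw : G.Adj u w) (hwv : G.Adj w v) : 2 * t - 1 ≤ (f u ∪ f v).card := by
  have card_inter_le_one := hf.card_inter_le_one_of_adj_of_adj huv huw hwv
  have card_union_add := Finset.card_union_add_card_inter (f u) (f v)
  rw [(hf.1 u).2, (hf.1 v).2] at card_union_add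
  omega

theorem four_mul_sub_one_le_of_diamond (hf : IsTToneColoring G t k f) {a b c d : V}
    (hab : G.Adj a b) (hac : G.Adj a c) (had : G.Adj a d) (hbc : G.Adj b c) (hbd : G.Adj b d)
    (hcd : c ≠ d) : 4 * t - 1 ≤ k := by
  have hdisj : Disjoint (f a ∪ f b) (f c ∪ f d) := by
    simp only [Finset.disjoint_union_left, Finset.disjoint_union_right]
    exact ⟨⟨hf.disjoint_of_adj hac, hf.disjoint_of_adj hbc⟩,
      hf.disjoint_of_adj had, hf.disjoint_of_adj hbd⟩
  calc
    4 * t - 1 ≤ 2 * t + (2 * t - 1) := by omega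
    _ ≤ (f a ∪ f b).card + (f c ∪ f d).card :=
      Nat.add_le_add (hf.card_union_of_adj hab).ge
        (hf.two_mul_sub_one_le_card_union_of_adj_of_adj hcd hac.symm had)
    _ = ((f a ∪ f b) ∪ (f c ∪ f d)).card := (Finset.card_union_of_disjoint hdisj).symm
    _ ≤ (Finset.Icc 1 k).card := Finset.card_le_card <|
      Finset.union_subset (Finset.union_subset (hf.1 a).1 (hf.1 b).1)
        (Finset.union_subset (hf.1 c).1 (hf.1 d).1)
    _ = k := Nat.card_Icc 1 k

end IsTToneColoring

end Coloring

theorem stmt13_general {V : Type*} (G : SimpleGraph V) {t : ℕ}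
    (hcol : ∃ k f, IsTToneColoring G t k f)
    (h : ∃ φ : Fin 4 ↪ V, ∀ u v : Fin 4, K4minusE.Adj u v → G.Adj (φ u) (φ v)) :
    4 * t - 1 ≤ toneNumber G t := by
  obtain ⟨f, hf⟩ := exists_isTToneColoring_toneNumber hcol
  obtain ⟨φ, hφ⟩ := h
  exact hf.four_mul_sub_one_le_of_diamond
    (hφ 0 1 (by simp [K4minusE])) (hφ 0 2 (by simp [K4minusE])) (hφ 0 3 (by simp [K4minusE]))
    (hφ 1 2 (by simp [K4minusE])) (hφ 1 3 (by simp [K4minusE])) (φ.injective.ne (by decide))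

/-- If a finite simple graph `G` contains `K₄ − e` as a subgraph, then `τ₂(G) ≥ 7`. -/
theorem stmt13 {V : Type*} [Fintype V] (G : SimpleGraph V)
    (h : ∃ φ : Fin 4 ↪ V, ∀ u v : Fin 4, K4minusE.Adj u v → G.Adj (φ u) (φ v)) :
    7 ≤ toneNumber G 2 :=
  stmt13_general G (exists_isTToneColoring_of_finite G 2) h
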